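/- arXiv:1507.06167 — 7 statements merged into one kernel-verified Lean document; each statement's English description precedes it below -/
import Mathlib

section
/- For every n ≥ 1, every set X, every i ∈ {1,…,n}, and all n-ary partial functions a₁,…,aₙ, b on X, the twisted law for antidomain holds: ⟨a₁,…,aₙ⟩∘Aᵢb = ⟨A(⟨a⟩∘b)⟩∘⟨Da₁⟩∘⟨Da₂⟩∘⋯∘⟨Daₙ⟩∘aᵢ, where ⟨A(⟨a⟩∘b)⟩ = (A₁(⟨a⟩∘b),…,Aₙ(⟨a⟩∘b)) and ⟨Daⱼ⟩ = (D₁aⱼ,…,Dₙaⱼ). -/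
/-!
Both sides are described by their graphs. The tuples `⟨Au⟩` and `⟨Du⟩` act as restrictions of the
identity of `X^n`, so composing with them only adds a condition on the argument. Hence `y` is a
value of the right side at `x` iff `⟨a⟩∘b` is undefined at `x`, every `aⱼ` is defined at `x`, and
`y` is a value of `aᵢ` at `x`. Once every `aⱼ(x)` is defined, `⟨a⟩∘b` is undefined at `x` exactly
when `b` is undefined at `(a₁(x),…,aₙ(x))`, which is the condition defining the left side.
-/

/-- Composition of `n`-ary partial functions: `⟨f₁,…,fₙ⟩∘g` is defined at `x`
iff each `fᵢ(x)` is defined and `g` is defined at `(f₁(x),…,fₙ(x))`,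
in which case its value is `g(f₁(x),…,fₙ(x))`. -/
def nComp {n : ℕ} {X : Type*} (f : Fin n → ((Fin n → X) →. X))
    (g : (Fin n → X) →. X) : (Fin n → X) →. X := fun x =>
  Part.mk (∃ h : ∀ i, (f i x).Dom, (g fun i => (f i x).get (h i)).Dom)
    (fun h => (g fun i => (f i x).get (h.choose i)).get h.choose_spec)

/-- The `i`-th domain operation: `Dᵢf` is defined at `x` with value `xᵢ` iff `f(x)` is defined. -/
def nDom {n : ℕ} {X : Type*} (i : Fin n) (f : (Fin n → X) →. X) :
    (Fin n → X) →. X := fun x => Part.mk (f x).Dom (fun _ => x i)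

/-- The `i`-th antidomain operation: `Aᵢf` is defined at `x` with value `xᵢ` iff `f(x)` is undefined. -/
def nAnti {n : ℕ} {X : Type*} (i : Fin n) (f : (Fin n → X) →. X) :
    (Fin n → X) →. X := fun x => Part.mk (¬ (f x).Dom) (fun _ => x i)

/-- The chain `⟨Da₁⟩∘(⟨Da₂⟩∘(⋯∘(⟨Daₙ⟩∘t)))`. -/
def nDChain {n : ℕ} {X : Type*} (a : Fin n → ((Fin n → X) →. X))
    (t : (Fin n → X) →. X) : (Fin n → X) →. X :=
  (List.ofFn a).foldr (fun u acc => nComp (fun j => nDom j u) acc) t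

theorem mem_nComp {n : ℕ} {X : Type*} {f : Fin n → ((Fin n → X) →. X)}
    {g : (Fin n → X) →. X} {x : Fin n → X} {y : X} :
    y ∈ nComp f g x ↔ ∃ h : ∀ i, (f i x).Dom, y ∈ g fun i => (f i x).get (h i) :=
  ⟨fun ⟨⟨h, h'⟩, e⟩ => ⟨h, h', e⟩, fun ⟨h, h', e⟩ => ⟨⟨h, h'⟩, e⟩⟩

/-- `⟨Du⟩∘g` is the restriction of `g` to the domain of `u`. Positivity of `n` matters: for `n = 0`
the tuple `⟨Du⟩` is empty and imposes no condition. -/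
theorem mem_nComp_nDom {n : ℕ} (hn : 1 ≤ n) {X : Type*} {u g : (Fin n → X) →. X}
    {x : Fin n → X} {y : X} :
    y ∈ nComp (fun j => nDom j u) g x ↔ (u x).Dom ∧ y ∈ g x :=
  mem_nComp.trans ⟨fun ⟨h, e⟩ => ⟨h ⟨0, hn⟩, e⟩, fun ⟨h, e⟩ => ⟨fun _ => h, e⟩⟩

/-- `⟨Au⟩∘g` is the restriction of `g` to the complement of the domain of `u`. -/
theorem mem_nComp_nAnti {n : ℕ} (hn : 1 ≤ n) {X : Type*} {u g : (Fin n → X) →. X}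
    {x : Fin n → X} {y : X} :
    y ∈ nComp (fun j => nAnti j u) g x ↔ ¬ (u x).Dom ∧ y ∈ g x :=
  mem_nComp.trans ⟨fun ⟨h, e⟩ => ⟨h ⟨0, hn⟩, e⟩, fun ⟨h, e⟩ => ⟨fun _ => h, e⟩⟩

theorem mem_nDChain {n : ℕ} (hn : 1 ≤ n) {X : Type*} {a : Fin n → ((Fin n → X) →. X)}
    {t : (Fin n → X) →. X} {x : Fin n → X} {y : X} :
    y ∈ nDChain a t x ↔ (∀ j, (a j x).Dom) ∧ y ∈ t x := by
  -- The induction runs over an arbitrary list of functions of the fixed arity `n`.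
  have key : ∀ l : List ((Fin n → X) →. X),
      y ∈ l.foldr (fun u acc => nComp (fun j => nDom j u) acc) t x ↔
        (∀ u ∈ l, (u x).Dom) ∧ y ∈ t x := by
    intro l
    induction l with
    | nil => simp
    | cons u l ih => rw [List.foldr_cons, mem_nComp_nDom hn, ih, List.forall_mem_cons, and_assoc]
  rw [nDChain, key, List.forall_mem_ofFn_iff]

/-- The twisted law for antidomain:
`⟨a⟩∘Aᵢb = ⟨A(⟨a⟩∘b)⟩∘⟨Da₁⟩∘⋯∘⟨Daₙ⟩∘aᵢ`. -/
theorem twisted_law_for_antidomain {n : ℕ} (hn : 1 ≤ n) (X : Type*) (i : Fin n)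
    (a : Fin n → ((Fin n → X) →. X)) (b : (Fin n → X) →. X) :
    nComp a (nAnti i b) =
      nComp (fun j => nAnti j (nComp a b)) (nDChain a (a i)) := by
  funext x
  ext y
  rw [mem_nComp_nAnti hn, mem_nDChain hn, mem_nComp]
  constructor
  · rintro ⟨h, hb, e⟩
    exact ⟨fun ⟨_, hb'⟩ => hb hb', h, h i, e⟩
  · rintro ⟨hb, h, _, e⟩
    exact ⟨h, fun hb' => hb ⟨h, hb'⟩, e⟩
end

section
/- For every n ≥ 1, every set X, and all n-ary partial functions a, b, c on X: if ⟨D₁a,…,Dₙa⟩∘b = ⟨D₁a,…,Dₙa⟩∘c and ⟨A₁a,…,Aₙa⟩∘b = ⟨A₁a,…,Aₙa⟩∘c, then b = c. -/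
/-- Where every `fᵢ(x)` is defined with value `xᵢ`, the composite `⟨f₁,…,fₙ⟩∘g` agrees with `g`.
For each `x` this applies to the domain operations of `a` or to its antidomain operations,
according to whether `a(x)` is defined. -/
theorem nComp_apply_of_proj {n : ℕ} {X : Type*} (f : Fin n → ((Fin n → X) →. X))
    (g : (Fin n → X) →. X) (x : Fin n → X) (h : ∀ i, (f i x).Dom)
    (hx : ∀ i, (f i x).get (h i) = x i) : nComp f g x = g x := by
  have hx' : (fun i => (f i x).get (h i)) = x := funext hx
  have key : nComp f g x = g fun i => (f i x).get (h i) :=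
    Part.ext' ⟨fun hd => hd.choose_spec, fun hd => ⟨h, hd⟩⟩ fun _ _ => rfl
  rw [key, hx']

/-- The quasiequation: if `⟨D₁a,…,Dₙa⟩∘b = ⟨D₁a,…,Dₙa⟩∘c` and
`⟨A₁a,…,Aₙa⟩∘b = ⟨A₁a,…,Aₙa⟩∘c` then `b = c`. -/
theorem domain_antidomain_quasiequation {n : ℕ} (hn : 1 ≤ n) (X : Type*)
    (a b c : (Fin n → X) →. X)
    (hD : nComp (fun i => nDom i a) b = nComp (fun i => nDom i a) c)
    (hA : nComp (fun i => nAnti i a) b = nComp (fun i => nAnti i a) c) :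
    b = c := by
  funext x
  by_cases h : (a x).Dom
  · have hx := congrFun hD x
    rwa [nComp_apply_of_proj (fun i => nDom i a) b x (fun _ => h) (fun _ => rfl),
      nComp_apply_of_proj (fun i => nDom i a) c x (fun _ => h) (fun _ => rfl)] at hx
  · have hx := congrFun hA x
    rwa [nComp_apply_of_proj (fun i => nAnti i a) b x (fun _ => h) (fun _ => rfl),
      nComp_apply_of_proj (fun i => nAnti i a) c x (fun _ => h) (fun _ => rfl)] at hx
end

section
/- For every n ≥ 1, every set X, and all n-ary partial functions f, g on X: ⟨f⋈₁g, …, f⋈ₙg⟩∘f = ⟨f⋈₁g, …, f⋈ₙg⟩∘g, where f⋈ᵢg is the i-th tie of f and g. -/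
/-- The `i`-th tie operation: `f ⋈ᵢ g` is defined at `x` with value `xᵢ` iff either
both `f` and `g` are undefined at `x`, or both are defined at `x` with equal values. -/
def nTie {n : ℕ} {X : Type*} (i : Fin n) (f g : (Fin n → X) →. X) :
    (Fin n → X) →. X := fun x =>
  Part.mk ((¬ (f x).Dom ∧ ¬ (g x).Dom) ∨ ∃ y, y ∈ f x ∧ y ∈ g x) (fun _ => x i)

/-- The domain of every tie `f ⋈ᵢ g` is the set of points where `f` and `g` agree as partial
values. -/
theorem nTie_dom_iff {n : ℕ} {X : Type*} (i : Fin n) (f g : (Fin n → X) →. X) (x : Fin n → X) :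
    (nTie i f g x).Dom ↔ f x = g x := by
  change ((¬ (f x).Dom ∧ ¬ (g x).Dom) ∨ ∃ y, y ∈ f x ∧ y ∈ g x) ↔ f x = g x
  constructor
  · rintro (⟨hf, hg⟩ | ⟨y, hf, hg⟩)
    · rw [Part.eq_none_iff'.2 hf, Part.eq_none_iff'.2 hg]
    · rw [Part.eq_some_iff.2 hf, Part.eq_some_iff.2 hg]
  · intro h
    by_cases hf : (f x).Dom
    · exact Or.inr ⟨(f x).get hf, Part.get_mem hf, h ▸ Part.get_mem hf⟩
    · exact Or.inl ⟨hf, h ▸ hf⟩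

/-- Where defined, the tuple of ties is the identity, so precomposing with it restricts `h` to the
set where `f` and `g` agree. For `n = 0` the tuple is empty and imposes no condition, whence the
hypothesis `1 ≤ n`. -/
theorem mem_nComp_nTie {n : ℕ} (hn : 1 ≤ n) {X : Type*} (f g h : (Fin n → X) →. X)
    (x : Fin n → X) (y : X) :
    y ∈ nComp (fun i => nTie i f g) h x ↔ f x = g x ∧ y ∈ h x := by
  constructor
  · rintro ⟨⟨hd, hh⟩, rfl⟩
    exact ⟨(nTie_dom_iff ⟨0, hn⟩ f g x).1 (hd _), hh, rfl⟩
  · rintro ⟨he, hh, rfl⟩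
    exact ⟨⟨fun i => (nTie_dom_iff i f g x).2 he, hh⟩, rfl⟩

/-- `⟨f⋈₁g, …, f⋈ₙg⟩∘f = ⟨f⋈₁g, …, f⋈ₙg⟩∘g`. -/
theorem tie_equaliser {n : ℕ} (hn : 1 ≤ n) (X : Type*)
    (f g : (Fin n → X) →. X) :
    nComp (fun i => nTie i f g) f = nComp (fun i => nTie i f g) g := by
  funext x
  ext y
  rw [mem_nComp_nTie hn, mem_nComp_nTie hn]
  exact and_congr_right fun h => by rw [h]
end

section
/- For every n ≥ 1, every set X, and all n-ary partial functions f, g, h on X: h is the preferential union of f and g (h = f ⊔ g) if and only if ⟨D₁f,…,Dₙf⟩∘h = f and ⟨A₁f,…,Aₙf⟩∘h = ⟨A₁f,…,Aₙf⟩∘g. -/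
/-- Preferential union: `(f ⊔ g)(x) = f(x)` if `f(x)` is defined, `g(x)` if `f(x)`
is undefined but `g(x)` is defined, and undefined otherwise. -/
noncomputable def nPref {n : ℕ} {X : Type*} (f g : (Fin n → X) →. X) :
    (Fin n → X) →. X := fun x =>
  Part.mk ((f x).Dom ∨ (g x).Dom)
    (fun h =>
      @dite _ ((f x).Dom) (Classical.dec _) (fun hf => (f x).get hf)
        (fun hf => (g x).get (h.resolve_left hf)))

/-- Precomposing with the identity restricted to `P`, written as an `n`-tuple of partial functions,
restricts `g` to `P`. For `n = 0` the empty tuple would forget `P`, hence `1 ≤ n`. -/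
theorem nComp_restrict {n : ℕ} (hn : 1 ≤ n) {X : Type*} (P : (Fin n → X) → Prop)
    (g : (Fin n → X) →. X) (x : Fin n → X) (a : X) :
    a ∈ nComp (fun i y => Part.mk (P y) (fun _ => y i)) g x ↔ P x ∧ a ∈ g x := by
  constructor
  · rintro ⟨⟨h1, h2⟩, rfl⟩
    exact ⟨h1 ⟨0, hn⟩, h2, rfl⟩
  · rintro ⟨h1, h2, rfl⟩
    exact ⟨⟨fun _ => h1, h2⟩, rfl⟩

theorem nPref_of_dom {n : ℕ} {X : Type*} (f g : (Fin n → X) →. X) {x : Fin n → X}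
    (hx : (f x).Dom) : nPref f g x = f x :=
  Part.ext' (by simp [nPref, hx]) (fun _ _ => by simp [nPref, hx])

theorem nPref_of_not_dom {n : ℕ} {X : Type*} (f g : (Fin n → X) →. X) {x : Fin n → X}
    (hx : ¬ (f x).Dom) : nPref f g x = g x :=
  Part.ext' (by simp [nPref, hx]) (fun _ _ => by simp [nPref, hx])

/-- `h` is the preferential union of `f` and `g` iff `⟨Df⟩∘h = f` and `⟨Af⟩∘h = ⟨Af⟩∘g`. -/
theorem preferential_union_characterisation {n : ℕ} (hn : 1 ≤ n) (X : Type*)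
    (f g h : (Fin n → X) →. X) :
    h = nPref f g ↔
      (nComp (fun i => nDom i f) h = f ∧
        nComp (fun i => nAnti i f) h = nComp (fun i => nAnti i f) g) := by
  have hD (k : (Fin n → X) →. X) (x : Fin n → X) (a : X) :
      a ∈ nComp (fun i => nDom i f) k x ↔ (f x).Dom ∧ a ∈ k x :=
    nComp_restrict hn (fun y => (f y).Dom) k x a
  have hA (k : (Fin n → X) →. X) (x : Fin n → X) (a : X) :
      a ∈ nComp (fun i => nAnti i f) k x ↔ ¬ (f x).Dom ∧ a ∈ k x :=
    nComp_restrict hn (fun y => ¬ (f y).Dom) k x a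
  constructor
  · rintro rfl
    refine ⟨funext fun x => Part.ext fun a => ?_, funext fun x => Part.ext fun a => ?_⟩
    · rw [hD]
      constructor
      · rintro ⟨hx, ha⟩
        rwa [nPref_of_dom f g hx] at ha
      · intro ha
        have hx : (f x).Dom := Part.dom_iff_mem.2 ⟨a, ha⟩
        exact ⟨hx, by rwa [nPref_of_dom f g hx]⟩
    · rw [hA, hA]
      exact and_congr_right fun hx => by rw [nPref_of_not_dom f g hx]
  · rintro ⟨h1, h2⟩
    refine funext fun x => Part.ext fun a => ?_
    by_cases hx : (f x).Dom
    · have := hD h x a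
      rw [h1] at this
      rw [nPref_of_dom f g hx, this, and_iff_right hx]
    · have := hA h x a
      rw [h2, hA, and_iff_right hx, and_iff_right hx] at this
      rw [nPref_of_not_dom f g hx, this]
end

section
/- Under the axioms (1)–(9), the restricted twisted laws for antidomain hold: for every i ∈ {1,…,n} and all a, b ∈ A, ⟨Aa⟩∘Aᵢb = ⟨A(⟨Aa⟩∘b)⟩∘Aᵢa. -/
/-!
Applying the twisted law to the tuple `⟨Aa⟩` gives the claim up to the chain
`⟨D(A₁a)⟩∘⋯∘⟨D(Aₙa)⟩∘Aᵢa`. Since `Aₖ(Aⱼa)` does not depend on `j` by axiom (9), all the tuples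
`⟨D(Aⱼa)⟩` coincide with `⟨D(Aᵢa)⟩`, which fixes `Aᵢa` by axiom (8); so the chain collapses to `Aᵢa`.
-/

/-- An algebra with an `(n+1)`-ary composition `⟨a₁,…,aₙ⟩∘b` and
`n` antidomain operations `A₁,…,Aₙ`. -/
structure MAlg (n : ℕ) (A : Type*) where
  comp : (Fin n → A) → A → A
  anti : Fin n → A → A

namespace MAlg

variable {n : ℕ} {A : Type*} [Inhabited A]

/-- `⟨Aa⟩ = (A₁a,…,Aₙa)`. -/
def avec (M : MAlg n A) (a : A) : Fin n → A := fun i => M.anti i a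

/-- `0 := ⟨Ab⟩∘b` (independent of `b` by axiom (3)). -/
def zero (M : MAlg n A) : A := M.comp (M.avec default) default

/-- `πᵢ := Aᵢ0`. -/
def pi (M : MAlg n A) (i : Fin n) : A := M.anti i M.zero

/-- `Dᵢa := Aᵢ(Aᵢa)`. -/
def dom (M : MAlg n A) (i : Fin n) (a : A) : A := M.anti i (M.anti i a)

/-- `⟨Da⟩ = (D₁a,…,Dₙa)`. -/
def dvec (M : MAlg n A) (a : A) : Fin n → A := fun i => M.dom i a

/-- The chain `⟨Da₁⟩∘(⟨Da₂⟩∘(⋯∘(⟨Daₙ⟩∘t)))`. -/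
def dchain (M : MAlg n A) (a : Fin n → A) (t : A) : A :=
  (List.ofFn a).foldr (fun u acc => M.comp (M.dvec u) acc) t

/-- Axioms (1)–(9). -/
structure Ax (M : MAlg n A) : Prop where
  /-- (1) superassociativity -/
  ax1 : ∀ (a b : Fin n → A) (c : A),
    M.comp (fun i => M.comp a (b i)) c = M.comp a (M.comp b c)
  /-- (2) `⟨π₁,…,πₙ⟩∘a = a` -/
  ax2 : ∀ a : A, M.comp M.pi a = a
  /-- (3) `⟨Aa⟩∘a = ⟨Ab⟩∘b` -/
  ax3 : ∀ a b : A, M.comp (M.avec a) a = M.comp (M.avec b) b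
  /-- (4) `⟨a₁,…,0,…,aₙ⟩∘b = 0` with `0` in any position -/
  ax4 : ∀ (a : Fin n → A) (i : Fin n) (b : A),
    M.comp (Function.update a i M.zero) b = M.zero
  /-- (5) `⟨a⟩∘0 = 0` -/
  ax5 : ∀ a : Fin n → A, M.comp a M.zero = M.zero
  /-- (6) the twisted laws for antidomain -/
  ax6 : ∀ (a : Fin n → A) (i : Fin n) (b : A),
    M.comp a (M.anti i b) = M.comp (M.avec (M.comp a b)) (M.dchain a (a i))
  /-- (7) the quasiequation -/
  ax7 : ∀ a b c : A,
    M.comp (M.dvec a) b = M.comp (M.dvec a) c →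
    M.comp (M.avec a) b = M.comp (M.avec a) c → b = c
  /-- (8) `⟨Da⟩∘a = a` -/
  ax8 : ∀ a : A, M.comp (M.dvec a) a = a
  /-- (9) `Aᵢ(Aⱼa) = Aᵢ(Aₖa)` -/
  ax9 : ∀ (i j k : Fin n) (a : A), M.anti i (M.anti j a) = M.anti i (M.anti k a)

end MAlg

theorem MAlg.Ax.dvec_anti {n : ℕ} {A : Type*} [Inhabited A] {M : MAlg n A} (hM : M.Ax)
    (i j : Fin n) (a : A) : M.dvec (M.anti j a) = M.dvec (M.anti i a) := by
  funext k
  exact congrArg (M.anti k) (hM.ax9 k j i a)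

theorem MAlg.Ax.dchain_avec {n : ℕ} {A : Type*} [Inhabited A] {M : MAlg n A} (hM : M.Ax)
    (i : Fin n) (a : A) : M.dchain (M.avec a) (M.anti i a) = M.anti i a := by
  have key : ∀ l : List A, (∀ u ∈ l, ∃ j, M.anti j a = u) →
      l.foldr (fun u acc => M.comp (M.dvec u) acc) (M.anti i a) = M.anti i a := by
    intro l
    induction l with
    | nil => intro _; rfl
    | cons u l ih =>
      intro h
      obtain ⟨j, rfl⟩ := h u (by simp)
      rw [List.foldr_cons, ih fun v hv => h v (by simp [hv]), hM.dvec_anti i j, hM.ax8]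
  refine key _ fun u hu => ?_
  obtain ⟨j, hj⟩ := List.mem_ofFn.mp hu
  exact ⟨j, hj⟩

/-- The restricted twisted laws for antidomain:
`⟨Aa⟩∘Aᵢb = ⟨A(⟨Aa⟩∘b)⟩∘Aᵢa`. -/
theorem restricted_twisted_laws {n : ℕ} (hn : 1 ≤ n) {A : Type*} [Inhabited A]
    (M : MAlg n A) (hM : M.Ax) (i : Fin n) (a b : A) :
    M.comp (M.avec a) (M.anti i b) =
      M.comp (M.avec (M.comp (M.avec a) b)) (M.anti i a) := by
  rw [hM.ax6]
  exact congrArg _ (hM.dchain_avec i a)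
end

section
/- Under the axioms (1)–(9), for all i, j ∈ {1,…,n} and all a, b, c ∈ A: ⟨Aa⟩∘Aᵢa = Aᵢa; ⟨Aa⟩∘Aᵢb = ⟨Ab⟩∘Aᵢa; ⟨Aa⟩∘(⟨Ab⟩∘c) = ⟨Ab⟩∘(⟨Aa⟩∘c); and Dⱼ(⟨Aa⟩∘Aᵢb) = ⟨Aa⟩∘Aⱼb. -/
namespace MAlg

/-- Restriction of `c` to the complement of the domain of `a`: the element `⟨Aa⟩∘c`. -/
def res {n : ℕ} {A : Type*} (M : MAlg n A) (a c : A) : A := M.comp (M.avec a) c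

namespace Ax

variable {n : ℕ} {A : Type*} [Inhabited A] {M : MAlg n A}

theorem avec_anti (hM : M.Ax) (j : Fin n) (a : A) : M.avec (M.anti j a) = M.dvec a := by
  funext i
  exact hM.ax9 i j i a

theorem comp_dvec (hM : M.Ax) (j : Fin n) (a c : A) :
    M.comp (M.dvec a) c = M.res (M.anti j a) c := by
  rw [res, hM.avec_anti]

theorem res_self (hM : M.Ax) (a : A) : M.res a a = M.zero := hM.ax3 a default

theorem res_zero_right (hM : M.Ax) (a : A) : M.res a M.zero = M.zero := hM.ax5 _

theorem res_zero_left (hM : M.Ax) (c : A) : M.res M.zero c = c := hM.ax2 c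

theorem res_assoc (hM : M.Ax) (a b c : A) :
    M.res a (M.res b c) = M.comp (fun i => M.res a (M.anti i b)) c :=
  (hM.ax1 _ _ _).symm

/-- An element is determined by its two restrictions along `a`. -/
theorem ext_along (hM : M.Ax) (j : Fin n) (a : A) {b c : A}
    (h₁ : M.res (M.anti j a) b = M.res (M.anti j a) c) (h₂ : M.res a b = M.res a c) : b = c :=
  hM.ax7 a b c (by rwa [hM.comp_dvec j, hM.comp_dvec j]) h₂

/-- All factors `⟨D(Aⱼa)⟩` of the chain equal `⟨D(Aᵢa)⟩`, which fixes `Aᵢa` by (8). -/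
theorem dchain_avec_s10 (hM : M.Ax) (a : A) (i : Fin n) :
    M.dchain (M.avec a) (M.anti i a) = M.anti i a := by
  have key : ∀ l : List A, (∀ u ∈ l, ∃ j, M.anti j a = u) →
      l.foldr (fun u acc => M.comp (M.dvec u) acc) (M.anti i a) = M.anti i a := by
    intro l
    induction l with
    | nil => intro _; rfl
    | cons u l ih =>
      intro h
      obtain ⟨j, rfl⟩ := h u (by simp)
      rw [List.foldr_cons, ih fun v hv => h v (List.mem_cons_of_mem _ hv)]
      have hd : M.dvec (M.anti j a) = M.dvec (M.anti i a) := by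
        funext k
        simp only [dvec, dom, hM.ax9 k j i a]
      rw [hd, hM.ax8]
  refine key _ fun u hu => ?_
  simpa [List.mem_ofFn, avec] using hu

/-- The twisted law for the tuple `⟨Aa⟩`, with the chain collapsed. -/
theorem res_anti (hM : M.Ax) (i : Fin n) (a b : A) :
    M.res a (M.anti i b) = M.res (M.res a b) (M.anti i a) := by
  have h := hM.ax6 (M.avec a) i b
  rwa [show M.avec a i = M.anti i a from rfl, hM.dchain_avec_s10] at h

theorem res_anti_self (hM : M.Ax) (i : Fin n) (a : A) : M.res a (M.anti i a) = M.anti i a := by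
  rw [hM.res_anti, hM.res_self, hM.res_zero_left]

theorem res_pi (hM : M.Ax) (i : Fin n) (a : A) : M.res a (M.pi i) = M.anti i a := by
  rw [pi, hM.res_anti, hM.res_zero_right, hM.res_zero_left]

theorem res_res (hM : M.Ax) (a b c : A) :
    M.res a (M.res b c) = M.res (M.res a b) (M.res a c) := by
  rw [hM.res_assoc, hM.res_assoc (M.res a b)]
  simp only [hM.res_anti _ a b]

theorem res_idem (hM : M.Ax) (a c : A) : M.res a (M.res a c) = M.res a c := by
  rw [hM.res_res, hM.res_self, hM.res_zero_left]

theorem comp_zero_left (hM : M.Ax) (j : Fin n) (c : A) :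
    M.comp (fun _ => M.zero) c = M.zero := by
  have h := hM.ax4 (fun _ => M.zero) j c
  rwa [Function.update_eq_self j (fun _ : Fin n => M.zero)] at h

theorem res_dom_left (hM : M.Ax) (j : Fin n) (a c : A) :
    M.res (M.anti j a) (M.res a c) = M.zero := by
  have h : ∀ i, M.res (M.anti j a) (M.anti i a) = M.zero := fun i => by
    rw [← hM.comp_dvec, hM.comp_dvec i, hM.res_self]
  rw [hM.res_assoc]
  simp only [h]
  exact hM.comp_zero_left j c

theorem res_dom_right (hM : M.Ax) (j : Fin n) (a c : A) :
    M.res a (M.res (M.anti j a) c) = M.zero := by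
  rw [hM.res_res, hM.res_anti_self, hM.res_dom_left]

theorem res_comm (hM : M.Ax) (j : Fin n) (a b c : A) :
    M.res a (M.res b c) = M.res b (M.res a c) := by
  apply hM.ext_along j a
  · rw [hM.res_dom_left, hM.res_res _ b, hM.res_dom_left, hM.res_zero_right]
  · rw [hM.res_idem, hM.res_res a b (M.res a c), hM.res_idem, ← hM.res_res]

theorem res_anti_comm (hM : M.Ax) (i : Fin n) (a b : A) :
    M.res a (M.anti i b) = M.res b (M.anti i a) := by
  rw [← hM.res_pi i b, ← hM.res_pi i a, hM.res_comm i]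

/-- An element supported off the domain of `a` has full antidomain on the domain of `a`. -/
theorem res_dom_anti (hM : M.Ax) (j k : Fin n) {a u : A} (h : M.res a u = u) :
    M.res (M.anti j a) (M.anti k u) = M.anti k (M.anti j a) := by
  rw [hM.res_anti, ← h, hM.res_dom_left, hM.res_zero_left]

/-- If `u` is supported off the domain of `a`, then so is `Dⱼu`. -/
theorem res_dom_of_res (hM : M.Ax) (j : Fin n) {a u : A} (h : M.res a u = u) :
    M.res a (M.dom j u) = M.dom j u := by
  apply hM.ext_along j a
  · rw [hM.res_dom_left, dom, hM.res_anti, hM.res_dom_anti j j h, hM.res_self]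
  · rw [hM.res_idem]

/-- On the part where `R a` lives, `c` and `R a c` have the same antidomain. -/
theorem res_anti_res (hM : M.Ax) (k : Fin n) (a c : A) :
    M.res a (M.anti k (M.res a c)) = M.res a (M.anti k c) := by
  rw [hM.res_anti, hM.res_idem, ← hM.res_anti]

/-- The antidomain of `R a (Aᵢb)` does not depend on `i`. -/
theorem anti_res_anti (hM : M.Ax) (i j k : Fin n) (a b : A) :
    M.anti k (M.res a (M.anti i b)) = M.anti k (M.res a (M.anti j b)) := by
  apply hM.ext_along k a
  · rw [hM.res_dom_anti k k (hM.res_idem _ _), hM.res_dom_anti k k (hM.res_idem _ _)]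
  · rw [hM.res_anti_res, hM.res_anti_res, hM.ax9 k i j]

theorem dom_res_anti (hM : M.Ax) (i j : Fin n) (a b : A) :
    M.dom j (M.res a (M.anti i b)) = M.res a (M.anti j b) := by
  have hua : M.res a (M.res a (M.anti i b)) = M.res a (M.anti i b) := hM.res_idem _ _
  have hub : M.res b (M.res a (M.anti i b)) = M.res a (M.anti i b) := by
    rw [hM.res_anti_comm i a b, hM.res_idem]
  have hv : M.avec (M.res a (M.anti i b)) = M.avec (M.res a (M.anti j b)) :=
    funext fun k => hM.anti_res_anti i j k a b
  have hz : M.res (M.res a (M.anti i b)) (M.res a (M.anti j b)) = M.zero := by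
    rw [res, hv]
    exact hM.res_self _
  generalize M.res a (M.anti i b) = u at *
  apply hM.ext_along j u
  -- On the domain of `u` both sides are `Dⱼu`.
  · rw [← hM.res_pi j b, hM.res_comm j _ a, hM.res_comm j _ b, hM.res_pi]
    change M.res _ (M.dom j u) = M.res a (M.res b (M.dom j u))
    rw [hM.res_dom_of_res j hub, hM.res_dom_of_res j hua]
    exact hM.res_anti_self j (M.anti j u)
  · rw [hz, dom, ← hM.res_pi j (M.anti j u), hM.res_dom_right]

end Ax

end MAlg

/-- Idempotence, commutativity and related laws for the antidomain elements:
`⟨Aa⟩∘Aᵢa = Aᵢa`; `⟨Aa⟩∘Aᵢb = ⟨Ab⟩∘Aᵢa`; `⟨Aa⟩∘(⟨Ab⟩∘c) = ⟨Ab⟩∘(⟨Aa⟩∘c)`;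
and `Dⱼ(⟨Aa⟩∘Aᵢb) = ⟨Aa⟩∘Aⱼb`. -/
theorem antidomain_element_laws {n : ℕ} (hn : 1 ≤ n) {A : Type*} [Inhabited A]
    (M : MAlg n A) (hM : M.Ax) :
    (∀ (i : Fin n) (a : A), M.comp (M.avec a) (M.anti i a) = M.anti i a) ∧
    (∀ (i : Fin n) (a b : A),
      M.comp (M.avec a) (M.anti i b) = M.comp (M.avec b) (M.anti i a)) ∧
    (∀ (a b c : A),
      M.comp (M.avec a) (M.comp (M.avec b) c) =
        M.comp (M.avec b) (M.comp (M.avec a) c)) ∧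
    (∀ (i j : Fin n) (a b : A),
      M.dom j (M.comp (M.avec a) (M.anti i b)) = M.comp (M.avec a) (M.anti j b)) := by
  exact ⟨hM.res_anti_self, hM.res_anti_comm, hM.res_comm ⟨0, hn⟩, hM.dom_res_anti⟩
end

section
/- If A satisfies the axioms (1)–(9) and additionally every element of A is injective, i.e. for every i ∈ {1,…,n} and all a, b₁,…,bₙ, c₁,…,cₙ ∈ A, ⟨b⟩∘a = ⟨c⟩∘a implies ⟨b⟩∘Dᵢa = ⟨c⟩∘Dᵢa, then A is representable by injective n-ary partial functions: there exist a set X, an equivalence relation E on X, and an injective map θ from A into the n-ary partial functions on X satisfying conditions (i)–(iii) of the representation theorem (every θ(a) relates only E-equivalent points, θ preserves composition, and θ(Aᵢa) is defined at x with value xᵢ iff x₁,…,xₙ are pairwise E-equivalent and θ(a) is undefined at x), such that in addition every partial function θ(a) is injective (θ(a)(x) = θ(a)(y) defined implies x = y). -/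
/-!
Each test vector `⟨Aa⟩` acts on `A` by `t ↦ ⟨Aa⟩∘t`. The axioms make these maps commuting
idempotents, with `⟨Aa⟩` and `⟨Da⟩` complementary (`aact_comm`, `aact_idem`, `aact_dact`). A point of
the Stone space is encoded by the set `S` of elements that are undefined there: `S` contains `u` or
`Aⱼu` for all `u` and `j`, and no finite product of the maps `⟨Au⟩∘-` with `u ∈ S` is identically
zero (`IsUlt`). Two elements are identified at `S` when some such finite product sends them to the
same element (`eqv`).

The base of the representation is the disjoint union over all `S` of the classes at `S` other than
the class of `0`, two points are `E`-related when they lie over the same `S`, and `c` acts by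
`([a₁],…,[aₙ]) ↦ [⟨a⟩∘c]` whenever this class is not that of `0`. Superassociativity gives
preservation of composition, and the twisted laws give preservation of antidomain: at `S` the right
side of the twisted law collapses to `aᵢ` or to `0`. Faithfulness is a separation statement
(`exists_ult`): if `a ≠ b`, a set `S` maximal with the property that no finite product identifies
`a` and `b` satisfies `IsUlt`, by the quasiequation. Finally, if `⟨b⟩∘a` and `⟨c⟩∘a` are identified
at `S`, then so are `⟨b⟩∘Dᵢa` and `⟨c⟩∘Dᵢa` by injectivity of `a`, and these represent the `i`-th
arguments.
-/


universe u


namespace MAlg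

/-! ### Calculus of test vectors -/

section Calculus

variable {n : ℕ} {A : Type u} [Inhabited A] {M : MAlg n A}

theorem comp_zero_arg (hM : M.Ax) (r : Fin n → A) (i : Fin n) (h : r i = M.zero) (t : A) :
    M.comp r t = M.zero := by
  have := hM.ax4 r i t
  rwa [show Function.update r i M.zero = r by rw [← h, Function.update_eq_self]] at this

theorem aact_self (hM : M.Ax) (a : A) : M.comp (M.avec a) a = M.zero := hM.ax3 _ _

theorem dvec_eq (hM : M.Ax) (a : A) (j : Fin n) : M.dvec a = M.avec (M.anti j a) := by
  funext i
  exact hM.ax9 i i j a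

theorem dvec_anti (hM : M.Ax) (a : A) (i j : Fin n) :
    M.dvec (M.anti i a) = M.dvec (M.anti j a) := by
  funext k
  simp only [dvec, dom]
  rw [hM.ax9 k i j a]

/-- For test vectors the domain chain in the twisted law is redundant. -/
theorem comp_avec_anti (hM : M.Ax) (a b : A) (i : Fin n) :
    M.comp (M.avec a) (M.anti i b) = M.comp (M.avec (M.comp (M.avec a) b)) (M.anti i a) := by
  have key : M.dchain (M.avec a) (M.anti i a) = M.anti i a := by
    have : ∀ l : List A, (∀ u ∈ l, ∃ j, u = M.anti j a) →
        l.foldr (fun u acc => M.comp (M.dvec u) acc) (M.anti i a) = M.anti i a := by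
      intro l
      induction l with
      | nil => intro _; rfl
      | cons u l ih =>
        intro h
        obtain ⟨j, rfl⟩ := h u (by simp)
        rw [List.foldr_cons, ih (fun v hv => h v (by simp [hv])), dvec_anti hM a j i]
        exact hM.ax8 _
    apply this
    intro u hu
    obtain ⟨j, rfl⟩ := (List.mem_ofFn' _ _).1 hu
    exact ⟨j, rfl⟩
  rw [hM.ax6]
  exact congrArg _ key

/-- Moving one test past another. -/
theorem aact_aact (hM : M.Ax) (a b t : A) :
    M.comp (M.avec a) (M.comp (M.avec b) t) =
      M.comp (M.avec (M.comp (M.avec a) b)) (M.comp (M.avec a) t) := by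
  rw [← hM.ax1, ← hM.ax1]
  congr 1
  funext i
  exact comp_avec_anti hM a b i

theorem aact_idem (hM : M.Ax) (a t : A) :
    M.comp (M.avec a) (M.comp (M.avec a) t) = M.comp (M.avec a) t := by
  rw [aact_aact hM, aact_self hM]
  exact hM.ax2 _

theorem dact_aact (hM : M.Ax) (i : Fin n) (a t : A) :
    M.comp (M.dvec a) (M.comp (M.avec a) t) = M.zero := by
  rw [← hM.ax1]
  apply comp_zero_arg hM _ i
  rw [dvec_eq hM a i]
  exact aact_self hM _

theorem aact_dact (hM : M.Ax) (i : Fin n) (a t : A) :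
    M.comp (M.avec a) (M.comp (M.dvec a) t) = M.zero := by
  rw [← hM.ax1]
  apply comp_zero_arg hM _ i
  have h1 : M.comp (M.avec a) (M.anti i a) = M.anti i a := by
    rw [comp_avec_anti hM, aact_self hM]
    exact hM.ax2 _
  change M.comp (M.avec a) (M.anti i (M.anti i a)) = M.zero
  rw [comp_avec_anti hM, h1]
  exact aact_self hM _

/-- Tests commute: by the quasiequation it suffices to compare both sides after applying `⟨Da⟩`,
where both vanish, and after applying `⟨Aa⟩`. -/
theorem aact_comm (hM : M.Ax) (i : Fin n) (a b t : A) :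
    M.comp (M.avec a) (M.comp (M.avec b) t) = M.comp (M.avec b) (M.comp (M.avec a) t) := by
  apply hM.ax7 a
  · rw [dact_aact hM i]
    rw [dvec_eq hM a i, aact_aact hM _ b, ← dvec_eq hM a i, dact_aact hM i, hM.ax5]
  · rw [aact_idem hM, aact_aact hM a b (M.comp (M.avec a) t), aact_idem hM, ← aact_aact hM]

/-- The action of a finite list of test vectors: `⟨Au₁⟩∘(⟨Au₂⟩∘(⋯∘t))`. -/
def op (M : MAlg n A) (l : List A) (t : A) : A :=
  l.foldr (fun u acc => M.comp (M.avec u) acc) t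

theorem op_cons (u : A) (l : List A) (t : A) :
    M.op (u :: l) t = M.comp (M.avec u) (M.op l t) := rfl

theorem op_append (l l' : List A) (t : A) : M.op (l ++ l') t = M.op l (M.op l' t) := by
  simp [op, List.foldr_append]

theorem op_aact (hM : M.Ax) (i : Fin n) (l : List A) (u t : A) :
    M.op l (M.comp (M.avec u) t) = M.comp (M.avec u) (M.op l t) := by
  induction l with
  | nil => rfl
  | cons v l ih => rw [op_cons, op_cons, ih, aact_comm hM i]

theorem op_comm (hM : M.Ax) (i : Fin n) (l l' : List A) (t : A) :
    M.op l (M.op l' t) = M.op l' (M.op l t) := by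
  induction l' with
  | nil => rfl
  | cons v l' ih => rw [op_cons, op_cons, op_aact hM i, ih]

theorem op_comp (hM : M.Ax) (l : List A) (r : Fin n → A) (c : A) :
    M.op l (M.comp r c) = M.comp (fun i => M.op l (r i)) c := by
  induction l with
  | nil => rfl
  | cons v l ih => rw [op_cons, ih, ← hM.ax1]; rfl

theorem op_zero (hM : M.Ax) (l : List A) : M.op l M.zero = M.zero := by
  induction l with
  | nil => rfl
  | cons v l ih => rw [op_cons, ih, hM.ax5]

theorem op_aact_twist (hM : M.Ax) (l : List A) (s t : A) :
    M.op l (M.comp (M.avec s) t) = M.comp (M.avec (M.op l s)) (M.op l t) := by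
  induction l with
  | nil => rfl
  | cons v l ih => rw [op_cons, ih, aact_aact hM]; rfl

/-- A product of tests that kills `s` kills everything below the domain of `s`. -/
theorem op_dact_zero (hM : M.Ax) (i : Fin n) (l : List A) (s t : A) (h : M.op l s = M.zero) :
    M.op l (M.comp (M.dvec s) t) = M.zero := by
  have h1 := op_aact_twist hM l s (M.comp (M.dvec s) t)
  rw [aact_dact hM i, op_zero hM, h] at h1
  exact (h1.trans (hM.ax2 _)).symm

end Calculus

/-! ### Ultrafilters of tests and the induced equivalences -/

section Ult

variable {n : ℕ} {A : Type u} [Inhabited A] {M : MAlg n A}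

/-- An ultrafilter of tests, given as the set `S` of those `u` for which the test `⟨Au⟩` holds. -/
structure IsUlt (M : MAlg n A) (S : Set A) : Prop where
  total : ∀ (u : A) (j : Fin n), u ∈ S ∨ M.anti j u ∈ S
  proper : ∀ l : List A, (∀ u ∈ l, u ∈ S) → ∃ t, M.op l t ≠ M.zero

/-- Equality of germs at `S`: `s` and `t` agree after finitely many tests from `S`. -/
def eqv (M : MAlg n A) (S : Set A) (s t : A) : Prop :=
  ∃ l : List A, (∀ u ∈ l, u ∈ S) ∧ M.op l s = M.op l t

theorem eqv_refl (S : Set A) (s : A) : M.eqv S s s := ⟨[], by simp, rfl⟩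

theorem eqv_symm {S : Set A} {s t : A} (h : M.eqv S s t) : M.eqv S t s := by
  obtain ⟨l, hl, e⟩ := h
  exact ⟨l, hl, e.symm⟩

theorem eqv_trans (hM : M.Ax) (i : Fin n) {S : Set A} {s t w : A} (h : M.eqv S s t)
    (h' : M.eqv S t w) : M.eqv S s w := by
  obtain ⟨l, hl, e⟩ := h
  obtain ⟨l', hl', e'⟩ := h'
  refine ⟨l ++ l', ?_, ?_⟩
  · intro u hu
    rcases List.mem_append.1 hu with h | h
    exacts [hl u h, hl' u h]
  · rw [op_append, op_comm hM i, e, op_comm hM i, e', ← op_append]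

/-- Germ equality is compatible with composition in the left arguments: concatenate the tests
witnessing the `n` equalities. -/
theorem eqv_comp (hM : M.Ax) (i₀ : Fin n) {S : Set A} {r r' : Fin n → A}
    (h : ∀ i, M.eqv S (r i) (r' i)) (c : A) : M.eqv S (M.comp r c) (M.comp r' c) := by
  have key : ∀ F : Finset (Fin n), ∃ l : List A, (∀ u ∈ l, u ∈ S) ∧
      ∀ i ∈ F, M.op l (r i) = M.op l (r' i) := by
    intro F
    induction F using Finset.induction_on with
    | empty => exact ⟨[], by simp, by simp⟩
    | insert j F _ ih =>
      obtain ⟨l, hl, e⟩ := ih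
      obtain ⟨l', hl', e'⟩ := h j
      refine ⟨l ++ l', ?_, ?_⟩
      · intro u hu
        rcases List.mem_append.1 hu with h | h
        exacts [hl u h, hl' u h]
      · intro i hi
        rcases Finset.mem_insert.1 hi with rfl | hi
        · rw [op_append, op_append, e']
        · rw [op_append, op_comm hM i₀, e i hi, op_append, op_comm hM i₀]
  obtain ⟨l, hl, e⟩ := key Finset.univ
  refine ⟨l, hl, ?_⟩
  rw [op_comp hM, op_comp hM]
  congr 1
  funext i
  exact e i (Finset.mem_univ i)

theorem eqv_aact (hM : M.Ax) (i : Fin n) {S : Set A} {s t : A} (u : A) (h : M.eqv S s t) :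
    M.eqv S (M.comp (M.avec u) s) (M.comp (M.avec u) t) := by
  obtain ⟨l, hl, e⟩ := h
  exact ⟨l, hl, by rw [op_aact hM i, e, op_aact hM i]⟩

theorem aact_eqv_of_mem (hM : M.Ax) {S : Set A} {u : A} (hu : u ∈ S) (t : A) :
    M.eqv S (M.comp (M.avec u) t) t :=
  ⟨[u], by simpa using hu, aact_idem hM u t⟩

/-- Strictness passes to germs. -/
theorem comp_eqv_zero (hM : M.Ax) {S : Set A} (r : Fin n → A) (i : Fin n)
    (h : M.eqv S (r i) M.zero) (t : A) : M.eqv S (M.comp r t) M.zero := by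
  rw [← hM.ax4 r i t]
  apply eqv_comp hM i
  intro j
  by_cases hj : j = i
  · subst hj
    simpa using h
  · rw [Function.update_of_ne hj]
    exact eqv_refl S _

theorem mem_of_eqv_zero (hM : M.Ax) (i : Fin n) {S : Set A} (hS : M.IsUlt S) {s : A}
    (h : M.eqv S s M.zero) : s ∈ S := by
  by_contra hs
  have hs' := (hS.total s i).resolve_left hs
  obtain ⟨l, hl, e⟩ := h
  rw [op_zero hM] at e
  obtain ⟨t, ht⟩ := hS.proper (l ++ [M.anti i s]) (by
    intro u hu
    rcases List.mem_append.1 hu with h | h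
    · exact hl u h
    · rw [List.mem_singleton.1 h]; exact hs')
  apply ht
  rw [op_append]
  change M.op l (M.comp (M.avec (M.anti i s)) t) = _
  rw [← dvec_eq hM]
  exact op_dact_zero hM i l s t e

theorem anti_mem_of_not_eqv_zero (hM : M.Ax) (i : Fin n) {S : Set A} (hS : M.IsUlt S) {s : A}
    (h : ¬ M.eqv S s M.zero) : M.anti i s ∈ S := by
  refine (hS.total s i).resolve_left fun hs => h ?_
  have := aact_eqv_of_mem hM hs s
  rw [aact_self hM] at this
  exact eqv_symm this

/-- At an ultrafilter where all `rⱼ` are nonzero, the domain chain in the twisted law disappears. -/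
theorem comp_anti_eqv (hM : M.Ax) {S : Set A} (hS : M.IsUlt S) (r : Fin n → A)
    (hr : ∀ j, ¬ M.eqv S (r j) M.zero) (i : Fin n) (b : A) :
    M.eqv S (M.comp r (M.anti i b)) (M.comp (M.avec (M.comp r b)) (r i)) := by
  rw [hM.ax6]
  apply eqv_aact hM i
  have : ∀ l : List A, (∀ u ∈ l, ¬ M.eqv S u M.zero) →
      M.eqv S (l.foldr (fun u acc => M.comp (M.dvec u) acc) (r i)) (r i) := by
    intro l
    induction l with
    | nil => intro _; exact eqv_refl S _
    | cons u l ih =>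
      intro h
      refine eqv_trans hM i ?_ (ih fun v hv => h v (by simp [hv]))
      rw [List.foldr_cons, dvec_eq hM u i]
      exact aact_eqv_of_mem hM (anti_mem_of_not_eqv_zero hM i hS (h u (by simp))) _
  apply this
  intro u hu
  obtain ⟨j, rfl⟩ := (List.mem_ofFn' _ _).1 hu
  exact hr j

theorem comp_anti_eqv_of_zero (hM : M.Ax) {S : Set A} (hS : M.IsUlt S) (r : Fin n → A)
    (hr : ∀ j, ¬ M.eqv S (r j) M.zero) (i : Fin n) (b : A) (hb : M.eqv S (M.comp r b) M.zero) :
    M.eqv S (M.comp r (M.anti i b)) (r i) :=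
  eqv_trans hM i (comp_anti_eqv hM hS r hr i b)
    (aact_eqv_of_mem hM (mem_of_eqv_zero hM i hS hb) _)

theorem comp_anti_eqv_of_ne (hM : M.Ax) {S : Set A} (hS : M.IsUlt S) (r : Fin n → A)
    (hr : ∀ j, ¬ M.eqv S (r j) M.zero) (i : Fin n) (b : A) (hb : ¬ M.eqv S (M.comp r b) M.zero) :
    M.eqv S (M.comp r (M.anti i b)) M.zero := by
  refine eqv_trans hM i (comp_anti_eqv hM hS r hr i b) ?_
  have := aact_eqv_of_mem hM (anti_mem_of_not_eqv_zero hM i hS hb)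
    (M.comp (M.avec (M.comp r b)) (r i))
  rw [← dvec_eq hM, dact_aact hM i] at this
  exact eqv_symm this

theorem pi_not_eqv_zero (hM : M.Ax) {S : Set A} (hS : M.IsUlt S) (i : Fin n) :
    ¬ M.eqv S (M.pi i) M.zero := by
  rintro ⟨l, hl, e⟩
  obtain ⟨t, ht⟩ := hS.proper l hl
  apply ht
  rw [← hM.ax2 t, op_comp hM]
  exact comp_zero_arg hM _ i (e.trans (op_zero hM l)) t

/-- Distinct elements have distinct germs at some ultrafilter. -/
theorem exists_ult (hM : M.Ax) (i₀ : Fin n) {a b : A} (hab : a ≠ b) :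
    ∃ S : Set A, M.IsUlt S ∧ ¬ M.eqv S a b := by
  let F : Set (Set A) := {S | ¬ M.eqv S a b}
  have hF : Order.IsOfFiniteCharacter F := by
    intro S
    constructor
    · rintro h T hT - ⟨l, hl, e⟩
      exact h ⟨l, fun u hu => hT (hl u hu), e⟩
    · rintro h ⟨l, hl, e⟩
      exact h {u | u ∈ l} hl (List.finite_toSet l) ⟨l, fun u hu => hu, e⟩
  have h0 : (∅ : Set A) ∈ F := by
    rintro ⟨l, hl, e⟩
    cases l with
    | nil => exact hab e
    | cons u l => exact hl u (by simp)
  obtain ⟨S, -, hS⟩ := hF.exists_maximal h0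
  have hSF : ¬ M.eqv S a b := hS.prop
  -- If `S ∪ {u}` identifies `a` and `b`, commuting the tests collects all
  -- occurrences of `⟨Au⟩` into a single outermost one.
  have step : ∀ u, u ∉ S → ∃ l : List A, (∀ v ∈ l, v ∈ S) ∧
      M.comp (M.avec u) (M.op l a) = M.comp (M.avec u) (M.op l b) := by
    intro u hu
    have h1 : insert u S ∉ F := fun h => hu (hS.le_of_ge h (Set.subset_insert u S)
      (Set.mem_insert u S))
    obtain ⟨l, hl, e⟩ := not_not.1 h1
    have red : ∀ l : List A, (∀ v ∈ l, v ∈ insert u S) → ∃ l' : List A, (∀ v ∈ l', v ∈ S) ∧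
        ∀ t, M.comp (M.avec u) (M.op l t) = M.comp (M.avec u) (M.op l' t) := by
      intro l
      induction l with
      | nil => intro _; exact ⟨[], by simp, fun _ => rfl⟩
      | cons v l ih =>
        intro h
        obtain ⟨l', hl', e'⟩ := ih fun w hw => h w (by simp [hw])
        rcases h v (by simp) with rfl | hv
        · exact ⟨l', hl', fun t => by rw [op_cons, aact_idem hM, e']⟩
        · refine ⟨v :: l', ?_, fun t => ?_⟩
          · intro w hw
            rcases List.mem_cons.1 hw with rfl | hw
            exacts [hv, hl' w hw]
          · rw [op_cons, op_cons, aact_comm hM i₀, e', aact_comm hM i₀]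
    obtain ⟨l', hl', e'⟩ := red l hl
    exact ⟨l', hl', by rw [← e', e, e']⟩
  refine ⟨S, ⟨?_, ?_⟩, hSF⟩
  · intro u j
    by_contra hcon
    push Not at hcon
    obtain ⟨l, hl, e⟩ := step u hcon.1
    obtain ⟨l', hl', e'⟩ := step _ hcon.2
    refine hSF ⟨l ++ l', ?_, ?_⟩
    · intro w hw
      rcases List.mem_append.1 hw with h | h
      exacts [hl w h, hl' w h]
    · rw [op_append, op_append]
      apply hM.ax7 u
      · rw [dvec_eq hM u j, ← op_aact hM j l, ← op_aact hM j l, e']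
      · rw [op_comm hM j l l', op_comm hM j l l', ← op_aact hM j l', ← op_aact hM j l', e]
  · intro l hl
    by_contra hcon
    push Not at hcon
    exact hSF ⟨l, hl, by rw [hcon, hcon]⟩

end Ult

/-! ### The representation -/

section Rep

variable {n : ℕ} {A : Type u} [Inhabited A] {M : MAlg n A}

/-- A point of the base set: an ultrafilter `S` of tests together with a nonzero germ `C` at `S`,
encoded as an equivalence class. -/
@[ext]
structure Pt (M : MAlg n A) : Type u where
  S : Set A
  C : Set A
  ult : M.IsUlt S
  germ : ∃ t, ¬ M.eqv S t M.zero ∧ C = {s | M.eqv S s t}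

namespace Pt

/-- The point over `S` given by the germ of `t`. -/
def mk' (S : Set A) (hS : M.IsUlt S) (t : A) (ht : ¬ M.eqv S t M.zero) : Pt M :=
  ⟨S, {s | M.eqv S s t}, hS, t, ht, rfl⟩

theorem mem_mk' (S : Set A) (hS : M.IsUlt S) (t : A) (ht : ¬ M.eqv S t M.zero) :
    t ∈ (mk' S hS t ht).C := eqv_refl S t

theorem nonempty (p : Pt M) : ∃ t, t ∈ p.C := by
  obtain ⟨t, _, e⟩ := p.germ
  exact ⟨t, e ▸ eqv_refl p.S t⟩

theorem eqv_of_mem (hM : M.Ax) (i : Fin n) (p : Pt M) {s t : A} (hs : s ∈ p.C) (ht : t ∈ p.C) :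
    M.eqv p.S s t := by
  obtain ⟨w, _, e⟩ := p.germ
  rw [e] at hs ht
  exact eqv_trans hM i hs (eqv_symm ht)

theorem mem_of_eqv (hM : M.Ax) (i : Fin n) (p : Pt M) {s t : A} (hs : s ∈ p.C)
    (h : M.eqv p.S s t) : t ∈ p.C := by
  obtain ⟨w, _, e⟩ := p.germ
  rw [e] at hs ⊢
  exact eqv_trans hM i (eqv_symm h) hs

theorem ne_zero (hM : M.Ax) (i : Fin n) (p : Pt M) {s : A} (hs : s ∈ p.C) :
    ¬ M.eqv p.S s M.zero := by
  obtain ⟨w, hw, e⟩ := p.germ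
  rw [e] at hs
  exact fun h => hw (eqv_trans hM i (eqv_symm hs) h)

theorem eq_of_mem (hM : M.Ax) (i : Fin n) {p q : Pt M} (hS : p.S = q.S) {t : A} (hp : t ∈ p.C)
    (hq : t ∈ q.C) : p = q := by
  refine Pt.ext hS (Set.ext fun s => ⟨fun hs => ?_, fun hs => ?_⟩)
  · exact mem_of_eqv hM i q hq (hS ▸ eqv_of_mem hM i p hp hs)
  · exact mem_of_eqv hM i p hp (hS ▸ eqv_of_mem hM i q hq hs)

end Pt

/-- The graph of the partial function representing `a`: all points lie over one ultrafilter, and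
`y` is the germ of `⟨r⟩∘a` for some representatives `r` of `x`. -/
def R (a : A) (x : Fin n → Pt M) (y : Pt M) : Prop :=
  (∀ i, (x i).S = y.S) ∧ ∃ r : Fin n → A, (∀ i, r i ∈ (x i).C) ∧ M.comp r a ∈ y.C

/-- `R` does not depend on the choice of representatives. -/
theorem R_iff (hM : M.Ax) (i₀ : Fin n) (a : A) (x : Fin n → Pt M) (y : Pt M) (r : Fin n → A)
    (hr : ∀ i, r i ∈ (x i).C) :
    R a x y ↔ (∀ i, (x i).S = y.S) ∧ M.comp r a ∈ y.C := by
  constructor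
  · rintro ⟨hS, r', hr', h⟩
    refine ⟨hS, Pt.mem_of_eqv hM i₀ y h (eqv_comp hM i₀ (fun i => ?_) a)⟩
    rw [← hS i]
    exact Pt.eqv_of_mem hM i₀ (x i) (hr' i) (hr i)
  · rintro ⟨hS, h⟩
    exact ⟨hS, r, hr, h⟩

theorem R_functional (hM : M.Ax) (i₀ : Fin n) (a : A) (x : Fin n → Pt M) (y z : Pt M)
    (hy : R a x y) (hz : R a x z) : y = z := by
  obtain ⟨hS, r, hr, h⟩ := hy
  obtain ⟨hSz, hz2⟩ := (R_iff hM i₀ a x z r hr).1 hz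
  exact Pt.eq_of_mem hM i₀ ((hS i₀).symm.trans (hSz i₀)) h hz2

/-- The representation: the partial function with graph `R a`. -/
noncomputable def rep (M : MAlg n A) (a : A) : (Fin n → Pt M) →. Pt M := fun x =>
  Part.mk (∃ y, R a x y) (fun h => h.choose)

theorem mem_rep (hM : M.Ax) (i₀ : Fin n) (a : A) (x : Fin n → Pt M) (y : Pt M) :
    y ∈ M.rep a x ↔ R a x y := by
  constructor
  · rintro ⟨h, rfl⟩
    exact h.choose_spec
  · intro h
    have hd : ∃ y, R a x y := ⟨y, h⟩
    exact ⟨hd, R_functional hM i₀ a x _ y hd.choose_spec h⟩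

theorem exists_reps (x : Fin n → Pt M) : ∃ r : Fin n → A, ∀ i, r i ∈ (x i).C :=
  ⟨fun i => (x i).nonempty.choose, fun i => (x i).nonempty.choose_spec⟩

theorem rep_dom_iff (hM : M.Ax) (i₀ : Fin n) (a : A) (x : Fin n → Pt M) (S : Set A)
    (hS : ∀ i, (x i).S = S) (r : Fin n → A) (hr : ∀ i, r i ∈ (x i).C) :
    (M.rep a x).Dom ↔ ¬ M.eqv S (M.comp r a) M.zero := by
  constructor
  · rintro ⟨y, hy⟩
    obtain ⟨hS', h⟩ := (R_iff hM i₀ a x y r hr).1 hy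
    rw [← hS i₀, hS' i₀]
    exact Pt.ne_zero hM i₀ y h
  · intro h
    have hU : M.IsUlt S := hS i₀ ▸ (x i₀).ult
    exact ⟨Pt.mk' S hU _ h, hS, r, hr, Pt.mem_mk' S hU _ h⟩

theorem rep_anti (hM : M.Ax) (a : A) (i : Fin n) (x : Fin n → Pt M) (y : Pt M) :
    y ∈ M.rep (M.anti i a) x ↔
      y = x i ∧ (∀ j k : Fin n, (x j).S = (x k).S) ∧ ¬ (M.rep a x).Dom := by
  obtain ⟨r, hr⟩ := exists_reps x
  rw [mem_rep hM i, R_iff hM i _ x y r hr]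
  have hnz : (∀ j k : Fin n, (x j).S = (x k).S) → ∀ j, ¬ M.eqv (x i).S (r j) M.zero :=
    fun hE j => hE j i ▸ Pt.ne_zero hM i (x j) (hr j)
  constructor
  · rintro ⟨hS, h⟩
    have hE : ∀ j k : Fin n, (x j).S = (x k).S := fun j k => (hS j).trans (hS k).symm
    have h0 : M.eqv (x i).S (M.comp r a) M.zero := by
      by_contra h0
      have := comp_anti_eqv_of_ne hM (x i).ult r (hnz hE) i a h0
      exact Pt.ne_zero hM i y h (hS i ▸ this)
    refine ⟨?_, hE, ?_⟩
    · have := comp_anti_eqv_of_zero hM (x i).ult r (hnz hE) i a h0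
      rw [hS i] at this
      exact Pt.eq_of_mem hM i (hS i).symm (Pt.mem_of_eqv hM i y h this) (hr i)
    · rw [rep_dom_iff hM i a x (x i).S (fun j => hE j i) r hr]
      exact not_not.2 h0
  · rintro ⟨rfl, hE, hd⟩
    rw [rep_dom_iff hM i a x (x i).S (fun j => hE j i) r hr, not_not] at hd
    exact ⟨fun j => hE j i, Pt.mem_of_eqv hM i (x i) (hr i)
      (eqv_symm (comp_anti_eqv_of_zero hM (x i).ult r (hnz hE) i a hd))⟩

theorem mem_nComp {X : Type u} (f : Fin n → ((Fin n → X) →. X)) (g : (Fin n → X) →. X)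
    (x : Fin n → X) (y : X) :
    y ∈ nComp f g x ↔ ∃ z : Fin n → X, (∀ i, z i ∈ f i x) ∧ y ∈ g z := by
  constructor
  · rintro ⟨h, rfl⟩
    exact ⟨fun i => (f i x).get (h.choose i), fun i => Part.get_mem _, Part.get_mem _⟩
  · rintro ⟨z, hz, hy⟩
    have hd : ∀ i, (f i x).Dom := fun i => (hz i).fst
    have e : (fun i => (f i x).get (hd i)) = z := funext fun i => (hz i).snd
    have hg : (g fun i => (f i x).get (hd i)).Dom := by rw [e]; exact hy.fst
    refine ⟨⟨hd, hg⟩, ?_⟩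
    have hy' : y ∈ g fun i => (f i x).get (hd i) := by rw [e]; exact hy
    exact hy'.snd

theorem rep_comp (hM : M.Ax) (i₀ : Fin n) (a : Fin n → A) (b : A) :
    M.rep (M.comp a b) = nComp (fun i => M.rep (a i)) (M.rep b) := by
  funext x
  apply Part.ext
  intro y
  obtain ⟨r, hr⟩ := exists_reps x
  rw [mem_nComp, mem_rep hM i₀, R_iff hM i₀ _ x y r hr, ← hM.ax1]
  constructor
  · rintro ⟨hS, h⟩
    have hnz : ∀ i, ¬ M.eqv y.S (M.comp r (a i)) M.zero := fun i h0 =>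
      Pt.ne_zero hM i y h (comp_eqv_zero hM (fun i => M.comp r (a i)) i h0 b)
    refine ⟨fun i => Pt.mk' y.S y.ult _ (hnz i), fun i => ?_, ?_⟩
    · rw [mem_rep hM i₀]
      exact ⟨hS, r, hr, Pt.mem_mk' y.S y.ult _ (hnz i)⟩
    · rw [mem_rep hM i₀]
      exact ⟨fun _ => rfl, _, fun i => Pt.mem_mk' y.S y.ult _ (hnz i), h⟩
  · rintro ⟨z, hz, hy⟩
    have hz' := fun i => (R_iff hM i₀ _ x _ r hr).1 ((mem_rep hM i₀ _ _ _).1 (hz i))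
    obtain ⟨hS, h⟩ := (R_iff hM i₀ _ z y _ fun i => (hz' i).2).1 ((mem_rep hM i₀ _ _ _).1 hy)
    exact ⟨fun i => ((hz' i).1 i).trans (hS i), h⟩

theorem rep_injective (hM : M.Ax) (i₀ : Fin n) : Function.Injective M.rep := by
  intro a b hab
  by_contra hne
  obtain ⟨S, hS, hn⟩ := exists_ult hM i₀ hne
  let x : Fin n → Pt M := fun i => Pt.mk' S hS (M.pi i) (pi_not_eqv_zero hM hS i)
  have hx : ∀ i, M.pi i ∈ (x i).C := fun i => Pt.mem_mk' S hS _ _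
  have key : ∀ c d, M.rep c = M.rep d → ¬ M.eqv S c M.zero → M.eqv S c d := by
    intro c d hcd hc
    have h1 : Pt.mk' S hS c hc ∈ M.rep c x := by
      rw [mem_rep hM i₀, R_iff hM i₀ _ x _ _ hx, hM.ax2]
      exact ⟨fun _ => rfl, Pt.mem_mk' S hS _ _⟩
    rw [hcd, mem_rep hM i₀, R_iff hM i₀ _ x _ _ hx, hM.ax2] at h1
    exact Pt.eqv_of_mem hM i₀ _ (Pt.mem_mk' S hS c hc) h1.2
  by_cases ha : M.eqv S a M.zero
  · by_cases hb : M.eqv S b M.zero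
    · exact hn (eqv_trans hM i₀ ha (eqv_symm hb))
    · exact hn (eqv_symm (key b a hab.symm hb))
  · exact hn (key a b hab ha)

/-- Where `a` is defined, `Dᵢa` acts as the `i`-th projection. -/
theorem comp_dom_mem (hM : M.Ax) (i : Fin n) (a : A) (x : Fin n → Pt M) (z : Pt M)
    (hz : z ∈ M.rep a x) (r : Fin n → A) (hr : ∀ i, r i ∈ (x i).C) :
    M.comp r (M.dom i a) ∈ (x i).C := by
  have hE := ((mem_rep hM i a x z).1 hz).1
  have h : x i ∈ M.rep (M.anti i (M.anti i a)) x := by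
    rw [rep_anti hM]
    refine ⟨rfl, fun j k => (hE j).trans (hE k).symm, fun hd => ?_⟩
    exact ((rep_anti hM a i x _).1 (Part.get_mem hd)).2.2 hz.fst
  exact ((R_iff hM i _ x _ r hr).1 ((mem_rep hM i _ _ _).1 h)).2

end Rep

end MAlg

/-- If an algebra satisfies axioms (1)–(9) and every element is injective, then it
is representable by injective `n`-ary partial functions. -/
theorem injective_representation_theorem {n : ℕ} (hn : 1 ≤ n) {A : Type u}
    [Inhabited A] (M : MAlg n A) (hM : M.Ax)
    (hinj : ∀ (i : Fin n) (a : A) (b c : Fin n → A),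
      M.comp b a = M.comp c a →
      M.comp b (M.dom i a) = M.comp c (M.dom i a)) :
    ∃ (X : Type u) (E : X → X → Prop), Equivalence E ∧
      ∃ θ : A → ((Fin n → X) →. X),
        Function.Injective θ ∧
        (∀ (a : A) (x : Fin n → X) (y : X), y ∈ θ a x →
          (∀ i j : Fin n, E (x i) (x j)) ∧ (∀ i : Fin n, E (x i) y)) ∧
        (∀ (a : Fin n → A) (b : A),
          θ (M.comp a b) = nComp (fun i => θ (a i)) (θ b)) ∧
        (∀ (a : A) (i : Fin n) (x : Fin n → X) (y : X),
          y ∈ θ (M.anti i a) x ↔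
            y = x i ∧ (∀ j k : Fin n, E (x j) (x k)) ∧ ¬ (θ a x).Dom) ∧
        (∀ (a : A) (x y : Fin n → X) (z : X), z ∈ θ a x → z ∈ θ a y → x = y) := by
  let i₀ : Fin n := ⟨0, hn⟩
  refine ⟨M.Pt, fun p q => p.S = q.S, ⟨fun _ => rfl, Eq.symm, Eq.trans⟩, M.rep,
    MAlg.rep_injective hM i₀, ?_, MAlg.rep_comp hM i₀, MAlg.rep_anti hM, ?_⟩
  · intro a x y hy
    have hE := ((MAlg.mem_rep hM i₀ a x y).1 hy).1
    exact ⟨fun i j => (hE i).trans (hE j).symm, hE⟩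
  · intro a x y z hx hy
    obtain ⟨hSx, r, hr, h⟩ := (MAlg.mem_rep hM i₀ a x z).1 hx
    obtain ⟨hSy, r', hr', h'⟩ := (MAlg.mem_rep hM i₀ a y z).1 hy
    obtain ⟨l, hl, e⟩ := MAlg.Pt.eqv_of_mem hM i₀ z h h'
    funext i
    -- Testing by `l` is absorbed into the arguments, where injectivity of `a` applies.
    rw [MAlg.op_comp hM, MAlg.op_comp hM] at e
    have e' := hinj i a _ _ e
    rw [← MAlg.op_comp hM, ← MAlg.op_comp hM] at e'
    have h1 := MAlg.comp_dom_mem hM i a x z hx r hr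
    have h2 := MAlg.comp_dom_mem hM i a y z hy r' hr'
    have hq : M.eqv (x i).S (M.comp r (M.dom i a)) (M.comp r' (M.dom i a)) :=
      ⟨l, (hSx i).symm ▸ hl, e'⟩
    exact MAlg.Pt.eq_of_mem hM i ((hSx i).trans (hSy i).symm)
      (MAlg.Pt.mem_of_eqv hM i (x i) h1 hq) h2
end
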